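/- Let $m > 2$ be an integer and for $i \ge 1$ define the integers $a_i(m) = (m-1)\left(\binom{m+2i-1}{m} - \binom{m+2i-3}{m}\right)$ and $b_i(m) = \binom{m+2i-4}{m-1} - \binom{m+2i-2}{m-1}$. Then for every integer $i \ge 1$ the partial sum of the arithmetic progressions matches the target sequence at the indices $m+2i-2$ and $m+2i-1$: $\sum_{k=1}^{i}\left(a_k(m) + (m+2i-2)\, b_k(m)\right) = -\binom{m+2i-2}{m}$ and $\sum_{k=1}^{i}\left(a_k(m) + (m+2i-1)\, b_k(m)\right) = -\binom{m+2i-1}{m}$. -/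

import Mathlib

/-- The coefficient `a_i(m)` from Theorem 2. -/
def aCoefNeg (m i : ℕ) : ℤ :=
  ((m : ℤ) - 1) * (((m + 2 * i - 1).choose m : ℤ) - ((m + 2 * i - 3).choose m : ℤ))

/-- The coefficient `b_i(m)` from Theorem 2. -/
def bCoefNeg (m i : ℕ) : ℤ :=
  ((m + 2 * i - 4).choose (m - 1) : ℤ) - ((m + 2 * i - 2).choose (m - 1) : ℤ)

theorem sumA (m : ℕ) (hm : 2 < m) (i : ℕ) :
    ∑ k ∈ Finset.Icc 1 i, aCoefNeg m k = ((m : ℤ) - 1) * ((m + 2 * i - 1).choose m : ℤ) := by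
  induction i with
  | zero => simp [Nat.choose_eq_zero_of_lt (show m - 1 < m by omega)]
  | succ n ih =>
    rw [Finset.sum_Icc_succ_top (by omega), ih, aCoefNeg,
      show m + 2 * (n + 1) - 3 = m + 2 * n - 1 by omega]
    ring

theorem sumB (m : ℕ) (hm : 2 < m) (i : ℕ) :
    ∑ k ∈ Finset.Icc 1 i, bCoefNeg m k = -((m + 2 * i - 2).choose (m - 1) : ℤ) := by
  induction i with
  | zero => simp [Nat.choose_eq_zero_of_lt (show m - 2 < m - 1 by omega)]
  | succ n ih =>
    rw [Finset.sum_Icc_succ_top (by omega), ih, bCoefNeg,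
      show m + 2 * (n + 1) - 4 = m + 2 * n - 2 by omega]
    ring

theorem stmt_10 (m : ℕ) (hm : 2 < m) (i : ℕ) (hi : 1 ≤ i) :
    (∑ k ∈ Finset.Icc 1 i, (aCoefNeg m k + ((m : ℤ) + 2 * (i : ℤ) - 2) * bCoefNeg m k)
        = -((m + 2 * i - 2).choose m : ℤ))
      ∧ (∑ k ∈ Finset.Icc 1 i, (aCoefNeg m k + ((m : ℤ) + 2 * (i : ℤ) - 1) * bCoefNeg m k)
          = -((m + 2 * i - 1).choose m : ℤ)) := by
  simp only [Finset.sum_add_distrib, ← Finset.mul_sum, sumA m hm, sumB m hm]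
  obtain ⟨q, rfl⟩ : ∃ q, m = q + 1 := ⟨m - 1, by omega⟩
  obtain ⟨N, hN⟩ : ∃ N, q + 1 + 2 * i - 2 = N := ⟨_, rfl⟩
  have h1 : q + 1 + 2 * i - 1 = N + 1 := by omega
  have hc : ((q : ℤ) + 1) + 2 * i = N + 2 := by omega
  rw [hN, h1]
  have e1 : ((N : ℤ) + 1) * (N.choose q : ℤ) = ((N + 1).choose (q + 1) : ℤ) * (q + 1) := by
    exact_mod_cast Nat.add_one_mul_choose_eq N q
  have e2 : ((N + 1).choose (q + 1) : ℤ) = N.choose q + N.choose (q + 1) := by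
    exact_mod_cast Nat.choose_succ_succ N q
  push_cast
  rw [hc]
  constructor
  · linear_combination -e1 - e2
  · linear_combination -e1
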